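/- For every n ∈ ℕ, α ≥ 1 and A ≥ 1 there exists a constant C = C(n,α,A) such that the following holds. Let v ∈ H¹(S²,S²) and let ω₁,…,ω_n : S² → S² be harmonic maps (i.e. −Δ_{g_{S²}}ωᵢ = |∇ωᵢ|²ωᵢ) with E(v) = ∑ᵢ E(ωᵢ) + δ for some δ ∈ (0,1/2). Suppose {Ωᵢ}_{i=1}^n is a measurable partition of S², that E(v) ≤ A and E(ωᵢ) ≤ A for all i, and that ∫_{S²} |∇ωᵢ|²·|v−ωᵢ|² dv_{g_{S²}} ≤ A·δ·(1+|log δ|) and ∫_{S²∖Ωᵢ} |∇ωᵢ|² dv_{g_{S²}} ≤ A·δ^{2α} for every i. Then ∑_{i=1}^n ∫_{Ωᵢ} |∇(v−ωᵢ)|² dv_{g_{S²}} ≤ C·δ·(1+|log δ|). -/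

import Mathlib

open MeasureTheory Metric Real Set Filter
open scoped RealInnerProductSpace

noncomputable section

abbrev E3 : Type := EuclideanSpace ℝ (Fin 3)

/-- The unit sphere `S² ⊂ ℝ³`. -/
def S2 : Set E3 := Metric.sphere (0 : E3) 1

/-- Surface measure on `S²`: 2-dimensional Hausdorff measure restricted to the sphere. -/
def sphVol : Measure E3 := (μH[2] : Measure E3).restrict S2

/-- The 0-homogeneous extension of a map defined on the sphere. -/
def homExt (u : E3 → E3) : E3 → E3 := fun y => u (‖y‖⁻¹ • y)

def e3 (i : Fin 3) : E3 := EuclideanSpace.single i (1 : ℝ)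

/-- Energy density `|∇u|²` of `u|_{S²}` at `x ∈ S²` (squared Hilbert-Schmidt norm of the
differential, computed via the 0-homogeneous extension). -/
def enDensity (u : E3 → E3) (x : E3) : ℝ :=
  ∑ i, ‖fderiv ℝ (homExt u) x (e3 i)‖ ^ 2

/-- Dirichlet energy `E(u,Ω) = (1/2)∫_Ω |∇u|²`. -/
def energyOn (u : E3 → E3) (Ω : Set E3) : ℝ :=
  (1 / 2) * ∫ x in Ω, enDensity u x ∂sphVol

def energy (u : E3 → E3) : ℝ := energyOn u S2

def det3 (a b c : E3) : ℝ :=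
  a 0 * (b 1 * c 2 - b 2 * c 1) - a 1 * (b 0 * c 2 - b 2 * c 0)
    + a 2 * (b 0 * c 1 - b 1 * c 0)

/-- The signed Jacobian of a sphere map. -/
def jacobian (u : E3 → E3) (x : E3) : ℝ :=
  (1 / 2) * ∑ i, ∑ j, det3 x (e3 i) (e3 j) *
      det3 (u x) (fderiv ℝ (homExt u) x (e3 i)) (fderiv ℝ (homExt u) x (e3 j))

/-- The (Brouwer) degree, `deg u = (1/4π) ∫ Jac(u)`. -/
def sphDeg (u : E3 → E3) : ℝ := (4 * π)⁻¹ * ∫ x, jacobian u x ∂sphVol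

/-- The energy defect `δ_u = E(u) - 4π|deg u|`. -/
def defect (u : E3 → E3) : ℝ := energy u - 4 * π * |sphDeg u|

def IsSphereMap (u : E3 → E3) : Prop :=
  ContDiff ℝ (⊤ : ℕ∞) u ∧ ∀ x ∈ S2, u x ∈ S2

/-- Laplace-Beltrami operator of the round sphere applied to `u`. -/
def sphLap (u : E3 → E3) (x : E3) : E3 :=
  ∑ i, fderiv ℝ (fun y => fderiv ℝ (homExt u) y (e3 i)) x (e3 i)

/-- Tension field `τ(u) = Δu + |∇u|² u`. -/
def tension (u : E3 → E3) (x : E3) : E3 :=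
  sphLap u x + enDensity u x • u x

/-- Harmonic (= rational, up to orientation) maps of the round sphere. -/
def IsHarmonicSphereMap (u : E3 → E3) : Prop :=
  IsSphereMap u ∧ ∀ x ∈ S2, tension u x = 0

/-- Geodesic distance on `S²`. -/
def gdist (x y : E3) : ℝ := Real.arccos ⟪x, y⟫

/-- Geodesic ball in `S²`. -/
def gBall (x : E3) (r : ℝ) : Set E3 := {y ∈ S2 | gdist x y < r}

/-- Oscillation of `u` over `U`. -/
def oscOn (u : E3 → E3) (U : Set E3) : ℝ := ⨆ x ∈ U, ⨆ y ∈ U, ‖u x - u y‖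

/-- The Möbius dilation of the sphere with centre `p` and dilation factor `μ`. -/
def mobius (p : E3) (μ : ℝ) (y : E3) : E3 :=
  ((1 + ⟪y, p⟫) + μ ^ 2 * (1 - ⟪y, p⟫))⁻¹ •
    (((1 + ⟪y, p⟫) - μ ^ 2 * (1 - ⟪y, p⟫)) • p + (2 * μ) • (y - ⟪y, p⟫ • p))

/-- The Möbius dilation `M_{p,r}` centred at `p` scaling `B_r(p)` to a hemisphere. -/
def mobiusDil (p : E3) (r : ℝ) : E3 → E3 := mobius p (Real.tan (r / 2))⁻¹

/-- `ρ_{p,r}² = (1/2)|∇M_{p,r}|²`, the conformal factor squared of `M_{p,r}`. -/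
def confSq (p : E3) (r : ℝ) (x : E3) : ℝ := (1 / 2) * enDensity (mobiusDil p r) x

/-- Möbius transformations (conformal diffeomorphisms) of the round sphere:
compositions of an isometry with a Möbius dilation. -/
def IsMobiusTransform (M : E3 → E3) : Prop :=
  ∃ (R : E3 ≃ₗᵢ[ℝ] E3) (p : E3) (μ : ℝ),
    p ∈ S2 ∧ 0 < μ ∧ ∀ x ∈ S2, M x = R (mobius p μ x)

/-- A set obtained from a geodesic ball by removing a finite collection of smaller balls. -/
def IsBallMinusBalls (Ω : Set E3) : Prop :=
  ∃ (c : E3) (R : ℝ) (m : ℕ) (cs : Fin m → E3) (rs : Fin m → ℝ),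
    c ∈ S2 ∧ 0 < R ∧ (∀ j, cs j ∈ S2 ∧ rs j < R) ∧
    Ω = gBall c R \ ⋃ j, gBall (cs j) (rs j)

/-!
Let `w` be one of the harmonic maps. Testing its equation with `v - w`, where `|v| = |w| = 1`, gives
`∫ |∇(v - w)|² = 2 E(v) - 2 E(w) + ∫ |∇w|² |v - w|²`. On the complement of the part `Ω` belonging
to `w`, Young's inequality gives `|∇(v - w)|² ≥ |∇v|² - δ |∇v|² - δ⁻¹ |∇w|²`, so replacing the
sphere by `Ω` on the left turns `2 E(v)` into `∫_Ω |∇v|²` up to admissible errors. Summing over the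
partition, the main terms add up to `2 E(v) - 2 ∑ E(ωᵢ) = 2 δ`. The integration by parts behind the
first identity holds for any finite rotation invariant measure on the sphere: it comes from
differentiating that invariance along one-parameter groups of rotations.
-/

section RotationInvariantMeasure

variable {E : Type*} [NormedAddCommGroup E] [InnerProductSpace ℝ E]

/-- A measure concentrated on the unit sphere and invariant under all linear isometries; together
with finiteness this is all that integration by parts on the sphere needs. -/
structure IsRotationInvariantOnSphere [MeasurableSpace E] (μ : Measure E) : Prop where
  ae_mem_sphere : ∀ᵐ x ∂μ, x ∈ sphere (0 : E) 1
  measurePreserving (R : E ≃ₗᵢ[ℝ] E) : MeasurePreserving R μ μ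

/-- The skew-adjoint operator `x ↦ ⟪a, x⟫ c - ⟪c, x⟫ a`, which generates the rotations in the plane
of `a` and `c`. -/
def rotationGenerator (a c : E) : E →L[ℝ] E :=
  InnerProductSpace.rankOne ℝ c a - InnerProductSpace.rankOne ℝ a c

theorem rotationGenerator_apply (a c x : E) :
    rotationGenerator a c x = ⟪a, x⟫ • c - ⟪c, x⟫ • a := rfl

theorem fderiv_inner_mul_rotationGenerator {f : E → ℝ} {x : E} (hf : DifferentiableAt ℝ f x)
    {a : E} (ha : ‖a‖ = 1) (c : E) :
    fderiv ℝ (fun y => ⟪a, y⟫ * f y) x (rotationGenerator a c x) =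
      ⟪a, x⟫ ^ 2 * fderiv ℝ f x c - ⟪c, x⟫ * (⟪a, x⟫ * fderiv ℝ f x a)
        + f x * (⟪c, a⟫ * ⟪a, x⟫) - ⟪c, x⟫ * f x := by
  have hinner : HasFDerivAt (fun y => ⟪a, y⟫) (innerSL ℝ a) x := (innerSL ℝ a).hasFDerivAt
  rw [(hinner.fun_mul hf.hasFDerivAt).fderiv]
  simp only [rotationGenerator_apply, add_apply, smul_apply, map_sub, map_smul, smul_eq_mul,
    innerSL_apply_apply, real_inner_self_eq_norm_sq, ha, real_inner_comm c a]
  ring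

theorem continuousOn_fderiv_clm_apply {s : Set E} {f : E → ℝ} (hf : ∀ x ∈ s, ContDiffAt ℝ 1 f x)
    (L : E →L[ℝ] E) : ContinuousOn (fun x => fderiv ℝ f x (L x)) s := fun x hx =>
  (((hf x hx).continuousAt_fderiv one_ne_zero).clm_apply
    L.continuous.continuousAt).continuousWithinAt

section Exponential

variable [CompleteSpace E]

theorem rotationGenerator_mem_skewAdjoint (a c : E) :
    rotationGenerator a c ∈ skewAdjoint (E →L[ℝ] E) := by
  simp [skewAdjoint.mem_iff, ContinuousLinearMap.star_eq_adjoint, rotationGenerator]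

/-- The rotation `exp J` generated by a skew-adjoint operator `J`, as a linear isometry. -/
def expIsometry {J : E →L[ℝ] E} (hJ : J ∈ skewAdjoint (E →L[ℝ] E)) : E ≃ₗᵢ[ℝ] E :=
  let +nondep : NormedAlgebra ℚ (E →L[ℝ] E) := .restrictScalars ℚ ℝ _
  Unitary.linearIsometryEquiv
    ⟨NormedSpace.exp J, NormedSpace.exp_mem_unitary_of_mem_skewAdjoint hJ⟩

theorem expIsometry_apply {J : E →L[ℝ] E} (hJ : J ∈ skewAdjoint (E →L[ℝ] E)) (x : E) :
    expIsometry hJ x = NormedSpace.exp J x := rfl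

theorem hasDerivAt_expIsometry_smul_apply {J : E →L[ℝ] E} (hJ : J ∈ skewAdjoint (E →L[ℝ] E))
    (x : E) (t : ℝ) :
    HasDerivAt (fun s : ℝ => expIsometry (skewAdjoint.smul_mem s hJ) x)
      (J (expIsometry (skewAdjoint.smul_mem t hJ) x)) t :=
  (ContinuousLinearMap.apply ℝ E x).hasFDerivAt.comp_hasDerivAt t
    (hasDerivAt_exp_smul_const' (𝕂 := ℝ) J t)

end Exponential

variable [FiniteDimensional ℝ E] [MeasurableSpace E] [BorelSpace E]
  {μ : Measure E} [IsFiniteMeasure μ]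

theorem IsRotationInvariantOnSphere.integrable (hμ : IsRotationInvariantOnSphere μ) {f : E → ℝ}
    (hf : ContinuousOn f (sphere 0 1)) : Integrable f μ := by
  rw [← Measure.restrict_eq_self_of_ae_mem hμ.ae_mem_sphere]
  exact hf.integrableOn_compact (isCompact_sphere 0 1)

/-- Differentiate `t ↦ ∫ f (exp (t J) x)`, which is constant by rotation invariance. -/
theorem IsRotationInvariantOnSphere.integral_fderiv_skewAdjoint
    (hμ : IsRotationInvariantOnSphere μ) {f : E → ℝ}
    (hf : ∀ x ∈ sphere (0 : E) 1, ContDiffAt ℝ 1 f x)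
    {J : E →L[ℝ] E} (hJ : J ∈ skewAdjoint (E →L[ℝ] E)) :
    ∫ x, fderiv ℝ f x (J x) ∂μ = 0 := by
  let R : ℝ → E ≃ₗᵢ[ℝ] E := fun t => expIsometry (skewAdjoint.smul_mem t hJ)
  have hR_mem (t : ℝ) {x : E} (hx : x ∈ sphere 0 1) : R t x ∈ sphere 0 1 := by simpa using hx
  have hR_zero (x : E) : R 0 x = x := by simp [R, expIsometry_apply]
  have hf_cont : ContinuousOn f (sphere 0 1) := fun x hx =>
    (hf x hx).continuousAt.continuousWithinAt
  have hf'_cont := continuousOn_fderiv_clm_apply hf J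
  obtain ⟨C, hC⟩ := (isCompact_sphere 0 1).exists_bound_of_continuousOn hf'_cont
  have hderiv : HasDerivAt (fun t => ∫ x, f (R t x) ∂μ)
      (∫ x, fderiv ℝ f (R 0 x) (J (R 0 x)) ∂μ) 0 := by
    refine (hasDerivAt_integral_of_dominated_loc_of_deriv_le
      (F' := fun t x => fderiv ℝ f (R t x) (J (R t x))) (bound := fun _ => C) univ_mem
      (.of_forall fun t => ?_) ?_ ?_ ?_ (integrable_const C) ?_).2
    · exact (hμ.integrable
        (hf_cont.comp (R t).continuous.continuousOn fun _ => hR_mem t)).aestronglyMeasurable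
    · simpa only [hR_zero] using hμ.integrable hf_cont
    · simpa only [hR_zero] using (hμ.integrable hf'_cont).aestronglyMeasurable
    · filter_upwards [hμ.ae_mem_sphere] with x hx t _ using hC _ (hR_mem t hx)
    · filter_upwards [hμ.ae_mem_sphere] with x hx t _
      exact ((hf _ (hR_mem t hx)).differentiableAt one_ne_zero).hasFDerivAt.comp_hasDerivAt t
        (hasDerivAt_expIsometry_smul_apply hJ x t)
  have hconst : (fun t => ∫ x, f (R t x) ∂μ) = fun _ => ∫ x, f x ∂μ := funext fun t =>
    (hμ.measurePreserving (R t)).integral_comp (R t).toHomeomorph.measurableEmbedding f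
  rw [hconst] at hderiv
  simpa only [hR_zero] using hderiv.unique (hasDerivAt_const 0 _)

/-- Sum `integral_fderiv_skewAdjoint` over the rotations in the planes of `b i` and `c`, applied to
`⟪b i, ·⟫ f`, where `b` is an orthonormal basis. The factor `finrank - 1` is the mean curvature of
the sphere. -/
theorem IsRotationInvariantOnSphere.integral_tangential_fderiv
    (hμ : IsRotationInvariantOnSphere μ) {f : E → ℝ}
    (hf : ∀ x ∈ sphere (0 : E) 1, ContDiffAt ℝ 1 f x)
    (c : E) :
    ∫ x, (fderiv ℝ f x c - ⟪c, x⟫ * fderiv ℝ f x x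
      - (Module.finrank ℝ E - 1) * (⟪c, x⟫ * f x)) ∂μ = 0 := by
  let b := stdOrthonormalBasis ℝ E
  have hg (i) : ∀ x ∈ sphere (0 : E) 1, ContDiffAt ℝ 1 (fun y => ⟪b i, y⟫ * f y) x := fun x hx =>
    ((innerSL ℝ (b i)).contDiff.contDiffAt).mul (hf x hx)
  have hrot (i) := hμ.integral_fderiv_skewAdjoint (hg i)
    (rotationGenerator_mem_skewAdjoint (b i) c)
  have hint (i) := hμ.integrable
    (continuousOn_fderiv_clm_apply (hg i) (rotationGenerator (b i) c))
  rw [← Finset.sum_eq_zero fun i (_ : i ∈ Finset.univ) => hrot i,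
    ← integral_finsetSum _ fun i _ => hint i]
  refine integral_congr_ae ?_
  filter_upwards [hμ.ae_mem_sphere] with x hx
  have hnorm : ∑ i, ⟪b i, x⟫ ^ 2 = 1 := by
    rw [b.sum_sq_inner_right, mem_sphere_zero_iff_norm.1 hx, one_pow]
  have hf' : ∑ i, ⟪b i, x⟫ * fderiv ℝ f x (b i) = fderiv ℝ f x x := by
    simp only [← smul_eq_mul, ← map_smul, ← map_sum, b.sum_repr']
  have hc : ∑ i, ⟪c, b i⟫ * ⟪b i, x⟫ = ⟪c, x⟫ := b.sum_inner_mul_inner c x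
  have hterm (i) := fderiv_inner_mul_rotationGenerator ((hf x hx).differentiableAt one_ne_zero)
    (b.norm_eq_one i) c
  simp only [hterm, Finset.sum_add_distrib, Finset.sum_sub_distrib, ← Finset.sum_mul,
    ← Finset.mul_sum, hnorm, hf', hc, Finset.sum_const, Finset.card_univ, Fintype.card_fin,
    nsmul_eq_mul]
  ring

/-- Differentiating `htan` in the radial direction shows that the normal derivatives in
`integral_tangential_fderiv` cancel. -/
theorem IsRotationInvariantOnSphere.integral_divergence_of_tangential {ι : Type*} [Fintype ι]
    (hμ : IsRotationInvariantOnSphere μ) (b : OrthonormalBasis ι ℝ E) {X : ι → E → ℝ}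
    (hX : ∀ i, ∀ x ∈ sphere (0 : E) 1, ContDiffAt ℝ 1 (X i) x)
    (htan : ∀ x ∈ sphere (0 : E) 1, ∀ᶠ y in nhds x, ∑ i, ⟪b i, y⟫ * X i y = 0) :
    ∫ x, ∑ i, fderiv ℝ (X i) x (b i) ∂μ = 0 := by
  have hint (i) : Integrable (fun x => fderiv ℝ (X i) x (b i) - ⟪b i, x⟫ * fderiv ℝ (X i) x x
      - (Module.finrank ℝ E - 1) * (⟪b i, x⟫ * X i x)) μ := by
    have hX_cont : ContinuousOn (X i) (sphere 0 1) := fun x hx =>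
      (hX i x hx).continuousAt.continuousWithinAt
    have hX' : ContinuousOn (fderiv ℝ (X i)) (sphere 0 1) := fun x hx =>
      ((hX i x hx).continuousAt_fderiv one_ne_zero).continuousWithinAt
    exact hμ.integrable (by fun_prop)
  rw [← Finset.sum_eq_zero fun i (_ : i ∈ Finset.univ) =>
    hμ.integral_tangential_fderiv (hX i) (b i), ← integral_finsetSum _ fun i _ => hint i]
  refine integral_congr_ae ?_
  filter_upwards [hμ.ae_mem_sphere] with x hx
  have hX_x : ∑ i, ⟪b i, x⟫ * X i x = 0 := (htan x hx).self_of_nhds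
  have hradial : ∑ i, ⟪b i, x⟫ * fderiv ℝ (X i) x x = 0 := by
    have hd := HasFDerivAt.fun_sum fun i (_ : i ∈ Finset.univ) =>
      (innerSL ℝ (b i)).hasFDerivAt.mul ((hX i x hx).differentiableAt one_ne_zero).hasFDerivAt
    have hzero := hd.unique ((hasFDerivAt_const (0 : ℝ) x).congr_of_eventuallyEq (htan x hx))
    simpa [Finset.sum_add_distrib, mul_comm (X _ x), hX_x] using DFunLike.congr_fun hzero x
  simp only [Finset.sum_sub_distrib, ← Finset.mul_sum, hX_x, hradial, mul_zero, sub_zero]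

/-- Green's identity: `∑ i, ⟪∂ᵢ u, w⟫ bᵢ` is tangential by Euler's relation `hu_euler`. -/
theorem IsRotationInvariantOnSphere.integral_inner_fderiv_add_inner_laplacian
    {ι F : Type*} [Fintype ι] [NormedAddCommGroup F] [InnerProductSpace ℝ F]
    (hμ : IsRotationInvariantOnSphere μ) (b : OrthonormalBasis ι ℝ E) {u w : E → F}
    (hu : ∀ x ∈ sphere (0 : E) 1, ContDiffAt ℝ 2 u x)
    (hw : ∀ x ∈ sphere (0 : E) 1, ContDiffAt ℝ 1 w x)
    (hu_euler : ∀ x ∈ sphere (0 : E) 1, ∀ᶠ y in nhds x, fderiv ℝ u y y = 0) :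
    ∫ x, (∑ i, ⟪fderiv ℝ u x (b i), fderiv ℝ w x (b i)⟫
      + ⟪∑ i, fderiv ℝ (fun y => fderiv ℝ u y (b i)) x (b i), w x⟫) ∂μ = 0 := by
  have hu' (i) : ∀ x ∈ sphere (0 : E) 1, ContDiffAt ℝ 1 (fun y => fderiv ℝ u y (b i)) x :=
    fun x hx => ((hu x hx).fderiv_right (by norm_num)).clm_apply contDiffAt_const
  rw [← hμ.integral_divergence_of_tangential b (X := fun i y => ⟪fderiv ℝ u y (b i), w y⟫)
    (fun i x hx => (hu' i x hx).inner ℝ (hw x hx)) ?_]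
  · refine integral_congr_ae ?_
    filter_upwards [hμ.ae_mem_sphere] with x hx
    rw [sum_inner, ← Finset.sum_add_distrib]
    refine Finset.sum_congr rfl fun i _ => ?_
    rw [fderiv_inner_apply ℝ ((hu' i x hx).differentiableAt one_ne_zero)
      ((hw x hx).differentiableAt one_ne_zero)]
  · intro x hx
    filter_upwards [hu_euler x hx] with y hy
    simp only [← real_inner_smul_left, ← map_smul, ← sum_inner, ← map_sum, b.sum_repr', hy,
      inner_zero_left]

end RotationInvariantMeasure

section SurfaceMeasure

theorem hausdorffMeasure_image_lt_top {ι F : Type*} [Fintype ι] [NormedAddCommGroup F]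
    [NormedSpace ℝ F] [MeasurableSpace F] [BorelSpace F] {f : (ι → ℝ) → F} (hf : ContDiff ℝ 1 f)
    {K : Set (ι → ℝ)} (hK : IsCompact K) : μH[Fintype.card ι] (f '' K) < ⊤ := by
  obtain ⟨L, hL⟩ :=
    hf.locallyLipschitz.locallyLipschitzOn.exists_lipschitzOnWith_of_compact hK
  refine (hL.hausdorffMeasure_image_le (Nat.cast_nonneg _)).trans_lt ?_
  rw [hausdorffMeasure_pi_real]
  exact ENNReal.mul_lt_top (ENNReal.rpow_lt_top_of_nonneg (Nat.cast_nonneg _) ENNReal.coe_ne_top)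
    hK.measure_lt_top

/-- Spherical coordinates on `S2`: `p 0` is the polar angle and `p 1` the azimuth. -/
def sphericalCoords (p : Fin 2 → ℝ) : E3 :=
  !₂[sin (p 0) * cos (p 1), sin (p 0) * sin (p 1), cos (p 0)]

theorem contDiff_sphericalCoords {n : ℕ∞} : ContDiff ℝ n sphericalCoords := by
  rw [contDiff_euclidean]
  intro i
  fin_cases i
  · change ContDiff ℝ n fun p : Fin 2 → ℝ => sin (p 0) * cos (p 1)
    fun_prop
  · change ContDiff ℝ n fun p : Fin 2 → ℝ => sin (p 0) * sin (p 1)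
    fun_prop
  · change ContDiff ℝ n fun p : Fin 2 → ℝ => cos (p 0)
    fun_prop

theorem S2_subset_sphericalCoords_image :
    S2 ⊆ sphericalCoords '' Icc (fun _ => -π) (fun _ => π) := by
  intro x hx
  have hsq : x 0 ^ 2 + x 1 ^ 2 + x 2 ^ 2 = 1 := by
    rw [← Fin.sum_univ_three fun i => x i ^ 2, ← EuclideanSpace.real_norm_sq_eq,
      mem_sphere_zero_iff_norm.1 hx, one_pow]
  obtain ⟨hlow, hupp⟩ : -1 ≤ x 2 ∧ x 2 ≤ 1 := abs_le_one_iff_mul_self_le_one.2 (by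
    nlinarith [sq_nonneg (x 0), sq_nonneg (x 1)]) |> abs_le.1
  have hsin : sin (arccos (x 2)) = ‖(⟨x 0, x 1⟩ : ℂ)‖ := by
    rw [sin_arccos, Complex.norm_def, Complex.normSq_mk]
    congr 1
    linarith
  refine ⟨![arccos (x 2), Complex.arg ⟨x 0, x 1⟩], ⟨fun i => ?_, fun i => ?_⟩, ?_⟩
  · fin_cases i
    · exact (neg_nonpos.2 pi_nonneg).trans (arccos_nonneg _)
    · exact (Complex.neg_pi_lt_arg _).le
  · fin_cases i
    · exact arccos_le_pi _
    · exact Complex.arg_le_pi _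
  · ext i
    fin_cases i
    · simp [sphericalCoords, hsin, Complex.norm_mul_cos_arg]
    · simp [sphericalCoords, hsin, Complex.norm_mul_sin_arg]
    · simp [sphericalCoords, cos_arccos hlow hupp]

instance : IsFiniteMeasure sphVol where
  measure_univ_lt_top := by
    rw [sphVol, Measure.restrict_apply_univ]
    refine (measure_mono S2_subset_sphericalCoords_image).trans_lt ?_
    simpa using hausdorffMeasure_image_lt_top (contDiff_sphericalCoords (n := 1)) isCompact_Icc

theorem measurableSet_S2 : MeasurableSet S2 := isClosed_sphere.measurableSet

theorem ae_mem_S2 : ∀ᵐ x ∂sphVol, x ∈ S2 := ae_restrict_mem measurableSet_S2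

theorem isRotationInvariantOnSphere_sphVol : IsRotationInvariantOnSphere sphVol where
  ae_mem_sphere := ae_mem_S2
  measurePreserving R := by
    have hpre : R ⁻¹' S2 = S2 := by
      ext x
      simp [S2]
    have hR := (R.toIsometryEquiv.measurePreserving_hausdorffMeasure 2).restrict_preimage
      measurableSet_S2
    change MeasurePreserving R (μH[2].restrict (R ⁻¹' S2)) (μH[2].restrict S2) at hR
    rwa [hpre] at hR

theorem sphVol_restrict_S2 : sphVol.restrict S2 = sphVol :=
  Measure.restrict_eq_self_of_ae_mem ae_mem_S2

theorem sphVol_restrict_S2_diff (Ω : Set E3) : sphVol.restrict (S2 \ Ω) = sphVol.restrict Ωᶜ := by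
  refine Measure.restrict_congr_set ?_
  filter_upwards [ae_mem_S2] with x hx
  exact propext ⟨And.right, And.intro hx⟩

theorem integrable_sphVol {f : E3 → ℝ} (hf : ContinuousOn f S2) : Integrable f sphVol :=
  isRotationInvariantOnSphere_sphVol.integrable hf

end SurfaceMeasure

theorem fderiv_apply_self_eq_zero_of_smul_eq {E F : Type*} [NormedAddCommGroup E]
    [NormedSpace ℝ E] [NormedAddCommGroup F] [NormedSpace ℝ F] {g : E → F} {x : E}
    (hg : DifferentiableAt ℝ g x) (hg_smul : ∀ t : ℝ, 0 < t → g (t • x) = g x) :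
    fderiv ℝ g x x = 0 := by
  have hray : HasDerivAt (fun t : ℝ => t • x) x 1 := by
    simpa using (hasDerivAt_id (1 : ℝ)).smul_const x
  have hcomp : HasDerivAt (fun t : ℝ => g (t • x)) (fderiv ℝ g x x) 1 :=
    hg.hasFDerivAt.comp_hasDerivAt_of_eq 1 hray (one_smul ℝ x).symm
  refine hcomp.unique ((hasDerivAt_const 1 (g x)).congr_of_eventuallyEq ?_)
  filter_upwards [lt_mem_nhds zero_lt_one] with t ht using hg_smul t ht

theorem real_inner_sub_self_of_norm_eq {F : Type*} [NormedAddCommGroup F] [InnerProductSpace ℝ F]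
    {a b : F} (h : ‖a‖ = ‖b‖) : ⟪b, a - b⟫ = -(‖a - b‖ ^ 2 / 2) := by
  rw [norm_sub_sq_real, h, inner_sub_right, real_inner_self_eq_norm_sq, real_inner_comm]
  ring

theorem norm_sq_le_norm_sub_sq_add {F : Type*} [NormedAddCommGroup F] [InnerProductSpace ℝ F]
    (a b : F) {θ : ℝ} (hθ : 0 < θ) :
    ‖a‖ ^ 2 ≤ ‖a - b‖ ^ 2 + (θ * ‖a‖ ^ 2 + θ⁻¹ * ‖b‖ ^ 2) := by
  have hyoung : 2 * ‖a‖ * ‖b‖ ≤ θ * ‖a‖ ^ 2 + θ⁻¹ * ‖b‖ ^ 2 := two_mul_le_add_mul_sq hθ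
  have hcs : ⟪a, b⟫ ≤ ‖a‖ * ‖b‖ := real_inner_le_norm a b
  rw [norm_sub_sq_real]
  linarith [sq_nonneg ‖b‖]

section EnergyDensity

theorem ne_zero_of_mem_S2 {x : E3} (hx : x ∈ S2) : x ≠ 0 := ne_zero_of_mem_unit_sphere ⟨x, hx⟩

/-- The pointwise inner product `⟨∇u, ∇w⟩`, whose quadratic form is `enDensity`. -/
def gradInner (u w : E3 → E3) (x : E3) : ℝ :=
  ∑ i, ⟪fderiv ℝ (homExt u) x (e3 i), fderiv ℝ (homExt w) x (e3 i)⟫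

theorem gradInner_self (u : E3 → E3) : gradInner u u = enDensity u := by
  ext x
  simp only [gradInner, enDensity, real_inner_self_eq_norm_sq]

theorem enDensity_nonneg (u : E3 → E3) (x : E3) : 0 ≤ enDensity u x :=
  Finset.sum_nonneg fun _ _ => sq_nonneg _

theorem homExt_of_mem_S2 (u : E3 → E3) {x : E3} (hx : x ∈ S2) : homExt u x = u x := by
  rw [homExt, mem_sphere_zero_iff_norm.1 hx, inv_one, one_smul]

theorem homExt_smul (u : E3 → E3) (x : E3) {t : ℝ} (ht : 0 < t) :
    homExt u (t • x) = homExt u x := by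
  simp only [homExt, norm_smul, norm_of_nonneg ht.le, smul_smul]
  congr 2
  field_simp

variable {u v w : E3 → E3}

theorem contDiffAt_homExt {n : WithTop ℕ∞} (hu : ContDiff ℝ n u) {x : E3} (hx : x ≠ 0) :
    ContDiffAt ℝ n (homExt u) x :=
  hu.contDiffAt.comp x (((contDiffAt_norm ℝ hx).inv (norm_ne_zero_iff.2 hx)).smul contDiffAt_id)

theorem differentiableAt_homExt (hu : ContDiff ℝ 1 u) {x : E3} (hx : x ∈ S2) :
    DifferentiableAt ℝ (homExt u) x :=
  (contDiffAt_homExt hu (ne_zero_of_mem_S2 hx)).differentiableAt one_ne_zero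

theorem fderiv_homExt_sub (hv : ContDiff ℝ 1 v) (hw : ContDiff ℝ 1 w) {x : E3} (hx : x ∈ S2) :
    fderiv ℝ (homExt (v - w)) x = fderiv ℝ (homExt v) x - fderiv ℝ (homExt w) x :=
  fderiv_sub (differentiableAt_homExt hv hx) (differentiableAt_homExt hw hx)

theorem continuousOn_gradInner (hu : ContDiff ℝ 1 u) (hw : ContDiff ℝ 1 w) :
    ContinuousOn (gradInner u w) S2 := by
  have hderiv {f : E3 → E3} (hf : ContDiff ℝ 1 f) :
      ContinuousOn (fderiv ℝ (homExt f)) S2 := fun x hx =>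
    ((contDiffAt_homExt hf (ne_zero_of_mem_S2 hx)).continuousAt_fderiv
      one_ne_zero).continuousWithinAt
  exact continuousOn_finsetSum _ fun i _ =>
    ((hderiv hu).clm_apply continuousOn_const).inner ((hderiv hw).clm_apply continuousOn_const)

theorem continuousOn_enDensity (hu : ContDiff ℝ 1 u) : ContinuousOn (enDensity u) S2 :=
  gradInner_self u ▸ continuousOn_gradInner hu hu

theorem integrable_enDensity (hu : ContDiff ℝ 1 u) : Integrable (enDensity u) sphVol :=
  integrable_sphVol (continuousOn_enDensity hu)

theorem two_mul_energy (u : E3 → E3) : 2 * energy u = ∫ x, enDensity u x ∂sphVol := by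
  rw [energy, energyOn, sphVol_restrict_S2]
  ring

theorem energy_nonneg (u : E3 → E3) : 0 ≤ energy u :=
  mul_nonneg one_half_pos.le (integral_nonneg (enDensity_nonneg u))

theorem enDensity_sub (hv : ContDiff ℝ 1 v) (hw : ContDiff ℝ 1 w) {x : E3} (hx : x ∈ S2) :
    enDensity (v - w) x = enDensity v x - enDensity w x - 2 * gradInner w (v - w) x := by
  simp only [enDensity, gradInner, fderiv_homExt_sub hv hw hx, sub_apply, Finset.mul_sum,
    ← Finset.sum_sub_distrib]
  refine Finset.sum_congr rfl fun i _ => ?_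
  rw [norm_sub_sq_real, inner_sub_right, real_inner_self_eq_norm_sq, real_inner_comm]
  ring

theorem enDensity_le_enDensity_sub_add (hv : ContDiff ℝ 1 v) (hw : ContDiff ℝ 1 w) {x : E3}
    (hx : x ∈ S2) {θ : ℝ} (hθ : 0 < θ) :
    enDensity v x ≤ enDensity (v - w) x + (θ * enDensity v x + θ⁻¹ * enDensity w x) := by
  simp only [enDensity, fderiv_homExt_sub hv hw hx, sub_apply, Finset.mul_sum,
    ← Finset.sum_add_distrib]
  exact Finset.sum_le_sum fun i _ => norm_sq_le_norm_sub_sq_add _ _ hθ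

theorem integral_gradInner_add_inner_sphLap (hu : ContDiff ℝ 2 u) (hw : ContDiff ℝ 1 w) :
    ∫ x, (gradInner u w x + ⟪sphLap u x, w x⟫) ∂sphVol = 0 := by
  have hbasis (i) : EuclideanSpace.basisFun (Fin 3) ℝ i = e3 i :=
    EuclideanSpace.basisFun_apply _ _ i
  have hgreen := isRotationInvariantOnSphere_sphVol.integral_inner_fderiv_add_inner_laplacian
    (EuclideanSpace.basisFun (Fin 3) ℝ)
    (fun x hx => contDiffAt_homExt hu (ne_zero_of_mem_S2 hx))
    (fun x hx => contDiffAt_homExt hw (ne_zero_of_mem_S2 hx)) (fun x hx => by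
      filter_upwards [isOpen_ne.mem_nhds (ne_zero_of_mem_S2 hx)] with y hy
      exact fderiv_apply_self_eq_zero_of_smul_eq
        ((contDiffAt_homExt hu hy).differentiableAt two_ne_zero) fun _ => homExt_smul u y)
  simp only [hbasis] at hgreen
  rw [← hgreen]
  refine integral_congr_ae ?_
  filter_upwards [ae_mem_S2] with x hx
  rw [homExt_of_mem_S2 w hx, gradInner, sphLap]

end EnergyDensity

section HarmonicMaps

variable {v w : E3 → E3}

/-- Testing the harmonic map equation with `v - w` gives the factor `⟪w, v - w⟫ = -|v - w|² / 2`,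
because both maps take values in the sphere. -/
theorem integral_gradInner_sub_of_tension_eq_zero (hv : ContDiff ℝ 1 v) (hvS : ∀ x ∈ S2, v x ∈ S2)
    (hw : ContDiff ℝ 2 w) (hwS : ∀ x ∈ S2, w x ∈ S2) (hw_tension : ∀ x ∈ S2, tension w x = 0) :
    ∫ x, gradInner w (v - w) x ∂sphVol =
      -((∫ x, enDensity w x * ‖v x - w x‖ ^ 2 ∂sphVol) / 2) := by
  have hw₁ : ContDiff ℝ 1 w := hw.of_le one_le_two
  have hsub : ContDiff ℝ 1 (v - w) := hv.sub hw₁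
  have hgrad : Integrable (gradInner w (v - w)) sphVol :=
    integrable_sphVol (continuousOn_gradInner hw₁ hsub)
  have hweight : Integrable (fun x => enDensity w x * ‖v x - w x‖ ^ 2) sphVol :=
    integrable_sphVol ((continuousOn_enDensity hw₁).mul
      ((hv.continuous.sub hw.continuous).norm.pow 2).continuousOn)
  rw [eq_neg_iff_add_eq_zero, ← integral_div, ← integral_add hgrad (hweight.div_const 2),
    ← integral_gradInner_add_inner_sphLap hw hsub]
  refine integral_congr_ae ?_
  filter_upwards [ae_mem_S2] with x hx
  have hnorm : ‖v x‖ = ‖w x‖ := by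
    rw [mem_sphere_zero_iff_norm.1 (hvS x hx), mem_sphere_zero_iff_norm.1 (hwS x hx)]
  have hlap : sphLap w x = -(enDensity w x • w x) := eq_neg_of_add_eq_zero_left (hw_tension x hx)
  rw [hlap, Pi.sub_apply, inner_neg_left, real_inner_smul_left,
    real_inner_sub_self_of_norm_eq hnorm]
  ring

theorem integral_enDensity_sub_of_tension_eq_zero (hv : ContDiff ℝ 1 v) (hvS : ∀ x ∈ S2, v x ∈ S2)
    (hw : ContDiff ℝ 2 w) (hwS : ∀ x ∈ S2, w x ∈ S2) (hw_tension : ∀ x ∈ S2, tension w x = 0) :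
    ∫ x, enDensity (v - w) x ∂sphVol =
      2 * energy v - 2 * energy w + ∫ x, enDensity w x * ‖v x - w x‖ ^ 2 ∂sphVol := by
  have hw₁ : ContDiff ℝ 1 w := hw.of_le one_le_two
  have hsub : ContDiff ℝ 1 (v - w) := hv.sub hw₁
  have hgrad : Integrable (gradInner w (v - w)) sphVol :=
    integrable_sphVol (continuousOn_gradInner hw₁ hsub)
  have hdiff : Integrable (fun x => enDensity v x - enDensity w x) sphVol :=
    (integrable_enDensity hv).sub (integrable_enDensity hw₁)
  have hexpand : enDensity (v - w) =ᵐ[sphVol]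
      fun x => enDensity v x - enDensity w x - 2 * gradInner w (v - w) x := by
    filter_upwards [ae_mem_S2] with x hx using enDensity_sub hv hw₁ hx
  rw [integral_congr_ae hexpand, integral_sub hdiff (hgrad.const_mul 2),
    integral_sub (integrable_enDensity hv) (integrable_enDensity hw₁), integral_const_mul,
    integral_gradInner_sub_of_tension_eq_zero hv hvS hw hwS hw_tension, two_mul_energy,
    two_mul_energy]
  ring

/-- The energy identity on all of `S2` loses only the part outside `Ω`, where Young's inequality
with weight `θ` replaces the missing smallness of `∇v` by that of `∇w`. -/
theorem setIntegral_enDensity_sub_le (hv : ContDiff ℝ 1 v) (hvS : ∀ x ∈ S2, v x ∈ S2)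
    (hw : ContDiff ℝ 2 w) (hwS : ∀ x ∈ S2, w x ∈ S2) (hw_tension : ∀ x ∈ S2, tension w x = 0)
    {Ω : Set E3} (hΩ : MeasurableSet Ω) {θ : ℝ} (hθ : 0 < θ) :
    ∫ x in Ω, enDensity (v - w) x ∂sphVol ≤
      ∫ x in Ω, enDensity v x ∂sphVol - 2 * energy w
        + (∫ x, enDensity w x * ‖v x - w x‖ ^ 2 ∂sphVol
          + θ * (2 * energy v) + θ⁻¹ * ∫ x in S2 \ Ω, enDensity w x ∂sphVol) := by
  have hw₁ : ContDiff ℝ 1 w := hw.of_le one_le_two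
  have hsub : ContDiff ℝ 1 (v - w) := hv.sub hw₁
  have hiv := integrable_enDensity hv
  have hiw := integrable_enDensity hw₁
  have hid := integrable_enDensity hsub
  have hcompl : ∫ x in Ωᶜ, enDensity v x ∂sphVol ≤ ∫ x in Ωᶜ, enDensity (v - w) x ∂sphVol
      + (θ * ∫ x in Ωᶜ, enDensity v x ∂sphVol + θ⁻¹ * ∫ x in Ωᶜ, enDensity w x ∂sphVol) := by
    have hi₁ := (hiv.const_mul θ).integrableOn (s := Ωᶜ)
    have hi₂ := (hiw.const_mul θ⁻¹).integrableOn (s := Ωᶜ)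
    have hi₁₂ : IntegrableOn (fun x => θ * enDensity v x + θ⁻¹ * enDensity w x) Ωᶜ sphVol :=
      hi₁.add hi₂
    rw [← integral_const_mul, ← integral_const_mul, ← integral_add hi₁ hi₂,
      ← integral_add hid.integrableOn hi₁₂]
    refine setIntegral_mono_ae hiv.integrableOn (hid.integrableOn.add hi₁₂) ?_
    filter_upwards [ae_mem_S2] with x hx using enDensity_le_enDensity_sub_add hv hw₁ hx hθ
  have hv_compl : θ * ∫ x in Ωᶜ, enDensity v x ∂sphVol ≤ θ * (2 * energy v) := by
    rw [two_mul_energy]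
    exact mul_le_mul_of_nonneg_left
      (setIntegral_le_integral hiv (.of_forall (enDensity_nonneg v))) hθ.le
  have hsplit_v := integral_add_compl hΩ hiv
  have hsplit_d := integral_add_compl hΩ hid
  rw [← two_mul_energy] at hsplit_v
  rw [integral_enDensity_sub_of_tension_eq_zero hv hvS hw hwS hw_tension] at hsplit_d
  rw [sphVol_restrict_S2_diff]
  linarith

theorem sum_setIntegral_enDensity {ι : Type*} [Fintype ι] (hv : ContDiff ℝ 1 v) {Ω : ι → Set E3}
    (hΩ_disj : Pairwise (Function.onFun Disjoint Ω)) (hΩ_cover : ⋃ i, Ω i = S2)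
    (hΩ : ∀ i, MeasurableSet (Ω i)) :
    ∑ i, ∫ x in Ω i, enDensity v x ∂sphVol = 2 * energy v := by
  rw [← integral_iUnion_fintype hΩ hΩ_disj fun i => (integrable_enDensity hv).integrableOn,
    hΩ_cover, sphVol_restrict_S2, two_mul_energy]

end HarmonicMaps

theorem inv_mul_rpow_two_mul_le {α δ : ℝ} (hα : 1 ≤ α) (hδ : δ ∈ Ioc (0 : ℝ) 1) :
    δ⁻¹ * δ ^ (2 * α) ≤ δ := by
  have hpow : δ ^ (2 * α) ≤ δ ^ 2 := by
    rw [← rpow_two]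
    exact rpow_le_rpow_of_exponent_ge hδ.1 hδ.2 (by linarith)
  rw [inv_mul_le_iff₀ hδ.1, ← sq]
  exact hpow

theorem statement12_general {ι : Type*} [Fintype ι] {α A δ : ℝ} (hα : 1 ≤ α)
    (hδ : δ ∈ Ioc (0 : ℝ) 1) {v : E3 → E3} {ω : ι → E3 → E3} {Ω : ι → Set E3}
    (hv : ContDiff ℝ 1 v) (hvS : ∀ x ∈ S2, v x ∈ S2)
    (hω : ∀ i, ContDiff ℝ 2 (ω i)) (hωS : ∀ i, ∀ x ∈ S2, ω i x ∈ S2)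
    (hω_tension : ∀ i, ∀ x ∈ S2, tension (ω i) x = 0)
    (hE : energy v = ∑ i, energy (ω i) + δ)
    (hΩ_disj : Pairwise (Function.onFun Disjoint Ω)) (hΩ_cover : ⋃ i, Ω i = S2)
    (hΩ : ∀ i, MeasurableSet (Ω i)) (hvA : energy v ≤ A)
    (hL : ∀ i, ∫ x, enDensity (ω i) x * ‖v x - ω i x‖ ^ 2 ∂sphVol ≤ A * δ * (1 + |log δ|))
    (hout : ∀ i, ∫ x in S2 \ Ω i, enDensity (ω i) x ∂sphVol ≤ A * δ ^ (2 * α)) :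
    ∑ i, ∫ x in Ω i, enDensity (v - ω i) x ∂sphVol ≤
      (2 + 4 * Fintype.card ι * A) * δ * (1 + |log δ|) := by
  have hδ₀ := hδ.1
  have hA : 0 ≤ A := (energy_nonneg v).trans hvA
  set X := 1 + |log δ|
  have hX : 1 ≤ X := le_add_of_nonneg_right (abs_nonneg _)
  have hδX : δ ≤ δ * X := le_mul_of_one_le_right hδ₀.le hX
  have herror (i) : ∫ x, enDensity (ω i) x * ‖v x - ω i x‖ ^ 2 ∂sphVol + δ * (2 * energy v)
      + δ⁻¹ * ∫ x in S2 \ Ω i, enDensity (ω i) x ∂sphVol ≤ 4 * A * (δ * X) := by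
    have hpow : A * (δ⁻¹ * δ ^ (2 * α)) ≤ A * (δ * X) :=
      mul_le_mul_of_nonneg_left ((inv_mul_rpow_two_mul_le hα hδ).trans hδX) hA
    calc _ ≤ A * δ * X + δ * (2 * A) + δ⁻¹ * (A * δ ^ (2 * α)) := by
          gcongr
          exacts [hL i, hout i]
      _ = A * (δ * X) + 2 * A * δ + A * (δ⁻¹ * δ ^ (2 * α)) := by ring
      _ ≤ A * (δ * X) + 2 * A * (δ * X) + A * (δ * X) := by gcongr
      _ = 4 * A * (δ * X) := by ring
  calc ∑ i, ∫ x in Ω i, enDensity (v - ω i) x ∂sphVol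
      ≤ ∑ i, (∫ x in Ω i, enDensity v x ∂sphVol - 2 * energy (ω i) + 4 * A * (δ * X)) :=
        Finset.sum_le_sum fun i _ => (setIntegral_enDensity_sub_le hv hvS (hω i) (hωS i)
          (hω_tension i) (hΩ i) hδ₀).trans (by gcongr; exact herror i)
    _ = 2 * δ + Fintype.card ι * (4 * A * (δ * X)) := by
        rw [Finset.sum_add_distrib, Finset.sum_sub_distrib,
          sum_setIntegral_enDensity hv hΩ_disj hΩ_cover hΩ, ← Finset.mul_sum, hE,
          Finset.sum_const, Finset.card_univ, nsmul_eq_mul]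
        ring
    _ ≤ 2 * (δ * X) + Fintype.card ι * (4 * A * (δ * X)) := by gcongr
    _ = (2 + 4 * Fintype.card ι * A) * δ * X := by ring

/-- Section 3.6: the weighted `L²` rigidity estimates for a collection of
harmonic maps imply the `H¹` rigidity estimate. -/
theorem statement12 (n : ℕ) (α A : ℝ) (hα : 1 ≤ α) (hA : 1 ≤ A) :
    ∃ C : ℝ, 0 < C ∧
      ∀ (v : E3 → E3) (ω : Fin n → E3 → E3) (δ : ℝ) (Ω : Fin n → Set E3),
        IsSphereMap v → (∀ i, IsHarmonicSphereMap (ω i)) →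
        δ ∈ Set.Ioo (0 : ℝ) (1 / 2) →
        energy v = (∑ i, energy (ω i)) + δ →
        (Set.univ : Set (Fin n)).PairwiseDisjoint Ω → (⋃ i, Ω i) = S2 →
        (∀ i, MeasurableSet (Ω i)) →
        energy v ≤ A → (∀ i, energy (ω i) ≤ A) →
        (∀ i, (∫ x, enDensity (ω i) x * ‖v x - ω i x‖ ^ 2 ∂sphVol)
            ≤ A * δ * (1 + |Real.log δ|)) →
        (∀ i, (∫ x in S2 \ Ω i, enDensity (ω i) x ∂sphVol) ≤ A * δ ^ (2 * α)) →
        (∑ i, ∫ x in Ω i, enDensity (fun y => v y - ω i y) x ∂sphVol)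
          ≤ C * δ * (1 + |Real.log δ|) := by
  refine ⟨2 + 4 * n * A, by positivity, fun v ω δ Ω hv hω hδ hE hΩ_disj hΩ_cover hΩ hvA _ hL hout =>
    ?_⟩
  have hbound := statement12_general hα ⟨hδ.1, by linarith [hδ.2]⟩ (contDiff_infty.1 hv.1 1) hv.2
    (fun i => contDiff_infty.1 (hω i).1.1 2) (fun i => (hω i).1.2) (fun i => (hω i).2) hE
    (pairwise_univ.1 hΩ_disj) hΩ_cover hΩ hvA hL hout
  rwa [Fintype.card_fin] at hbound
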